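/- (4/25)·Re Li₃((1−i)/8) − 2·Re Li₃(−i/2) = (21/100)·ζ(3) + (log³2)/12 − (7 π² log 2)/240. -/

import Mathlib

/-!
The identity comes from three real functions on the closed unit disc: the single-valued
trilogarithm `M`, the Bloch–Wigner dilogarithm `D`, and the Rogers-normalised real part `R` of the
dilogarithm. Along a curve `f`, the derivatives of `D ∘ f`, `R ∘ f`, `M ∘ f` only involve `D`,
`log ‖f‖`, `log ‖1 - f‖`, the argument of `1 - f`, and the logarithmic derivatives of `f` and
`1 - f`. When several curves `fᵢ` and `1 - fᵢ` are monomials in a few common factors, suitable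
combinations of the `M ∘ fᵢ` (or `R ∘ fᵢ`) are constant by bilinear cancellation, and the constant
is read off at an endpoint. The curves stay in the closed unit disc, with interior points in the
open disc, so no analytic continuation is needed.

Two such equations, of Spence–Kummer type, are used:

* on the segment from `0` to `(1 - I) / 4`, with factors `a`, `1 - a`, `1 - 2 * a` (`kummer_ray`),
  relating `(1 + I) / 8` to `(1 - I) / 4`, `I / 2` and `(±1 + I) / 2` up to signs and conjugation;
* on the vertical segment from `(-1 + I) / 2` to the primitive cube root of unity `w`, with factors
  `u`, `1 + u`, `1 - u`, `1 + u + u ^ 2` (`kummer_line`). On the line `Re u = -1/2` the factor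
  `1 + u + u ^ 2` is real and `1 + u` is minus the conjugate of `u`, which removes the remaining
  terms. It expresses the value at `(1 + I) / 4` by those at `(-1 + I) / 2` and `I / 2`.

Landen's equations (`landen`), duplication (`M_sq`, `R_sq`) and triplication at `1`
(`Li_cube_root`) give the values at `1 / 2`, `(1 + I) / 2`, `w`, and eliminate `(-1 + I) / 2`.
The outcome (`ladder_MR`) is

  `M ((1 + I) / 8) - 25 / 2 * M (I / 2) = 21 / 16 * ζ(3)`,
  `R ((1 + I) / 8) - 5 * R (I / 2) = 7 * π ^ 2 / 96`.

In the combination `4 / 25 * M - 2 / 5 * log 2 * R` of these two the dilogarithms cancel, and so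
does `log 5 = log ‖1 - (1 + I) / 8‖ + 5 / 2 * log 2`; what is left is the claim.
-/

open Complex

/-- The polylogarithm `Li n z = ∑_{k ≥ 1} z^k / k^n`. -/
noncomputable def Li (n : ℕ) (z : ℂ) : ℂ := ∑' k : ℕ, z ^ (k + 1) / ((k + 1 : ℕ) : ℂ) ^ n

/-- `ζ(3) = ∑_{k ≥ 1} 1/k³`. -/
noncomputable def zeta3 : ℝ := ∑' k : ℕ, (1 : ℝ) / ((k + 1 : ℕ) : ℝ) ^ 3

/-! ### The polylogarithm series on the closed unit disc -/

lemma summable_bound {n : ℕ} (hn : 2 ≤ n) :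
    Summable fun k : ℕ => (1 : ℝ) / ((k + 1 : ℕ) : ℝ) ^ n :=
  (summable_nat_add_iff (f := fun k : ℕ => (1 : ℝ) / (k : ℝ) ^ n) 1).2
    (Real.summable_one_div_nat_pow.2 (by omega))

lemma norm_term_le (n k : ℕ) {z : ℂ} (hz : ‖z‖ ≤ 1) :
    ‖z ^ (k + 1) / ((k + 1 : ℕ) : ℂ) ^ n‖ ≤ 1 / ((k + 1 : ℕ) : ℝ) ^ n := by
  rw [norm_div, norm_pow, norm_pow, Complex.norm_natCast]
  gcongr
  exact pow_le_one₀ (norm_nonneg _) hz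

lemma summable_Li {n : ℕ} (hn : 2 ≤ n) {z : ℂ} (hz : ‖z‖ ≤ 1) :
    Summable fun k : ℕ => z ^ (k + 1) / ((k + 1 : ℕ) : ℂ) ^ n :=
  Summable.of_norm_bounded (summable_bound hn) fun k => norm_term_le n k hz

lemma continuousOn_Li {n : ℕ} (hn : 2 ≤ n) : ContinuousOn (Li n) (Metric.closedBall 0 1) := by
  refine continuousOn_tsum (fun k => ?_) (summable_bound hn)
    (fun k z hz => norm_term_le n k (by simpa using hz))
  fun_prop

lemma Li_one {z : ℂ} (hz : ‖z‖ < 1) : Li 1 z = -Complex.log (1 - z) := by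
  have h := (hasSum_nat_add_iff' (f := fun n : ℕ => z ^ n / (n : ℂ)) 1).2
    (Complex.hasSum_taylorSeries_neg_log hz)
  simp only [Finset.range_one, Finset.sum_singleton, Nat.cast_zero, div_zero, sub_zero] at h
  simpa [Li] using h.tsum_eq

lemma Li_zero (n : ℕ) : Li n 0 = 0 := by simp [Li]

lemma Li_conj (n : ℕ) (z : ℂ) : Li n ((starRingEnd ℂ) z) = (starRingEnd ℂ) (Li n z) := by
  simp only [Li, Complex.conj_tsum, map_div₀, map_pow, Complex.conj_natCast]

/-- Termwise differentiation, `d/dz Li (n + 1) z = Li n z / z`. -/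
lemma hasDerivAt_Li (n : ℕ) {z : ℂ} (hz : ‖z‖ < 1) (h0 : z ≠ 0) :
    HasDerivAt (Li (n + 1)) (Li n z / z) z := by
  obtain ⟨r, hzr, hr1⟩ := exists_between hz
  have hr0 : 0 ≤ r := (norm_nonneg z).trans hzr.le
  have key := hasDerivAt_tsum_of_isPreconnected (𝕜 := ℂ) (F := ℂ)
    (g := fun k z => z ^ (k + 1) / ((k + 1 : ℕ) : ℂ) ^ (n + 1))
    (g' := fun k z => z ^ k / ((k + 1 : ℕ) : ℂ) ^ n)
    (u := fun k => r ^ k) (t := Metric.ball 0 r) (y₀ := 0) (y := z)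
    (summable_geometric_of_lt_one hr0 hr1) Metric.isOpen_ball
    (convex_ball 0 r).isPreconnected ?_ ?_ ?_ ?_ ?_
  · refine key.congr_deriv ?_
    simp only [Li]
    rw [← tsum_div_const]
    refine tsum_congr fun k => ?_
    rw [pow_succ, mul_div_right_comm, mul_div_cancel_right₀ _ h0]
  · intro k y _
    have hk : ((k + 1 : ℕ) : ℂ) ≠ 0 := Nat.cast_ne_zero.2 k.succ_ne_zero
    refine ((hasDerivAt_pow (k + 1) y).div_const (((k + 1 : ℕ) : ℂ) ^ (n + 1))).congr_deriv ?_
    rw [Nat.add_sub_cancel]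
    field_simp
    ring
  · intro k y hy
    have hy' : ‖y‖ ≤ r := by simpa using (Metric.mem_ball.1 hy).le
    rw [norm_div, norm_pow, norm_pow, Complex.norm_natCast]
    have h1 : (1 : ℝ) ≤ ((k + 1 : ℕ) : ℝ) ^ n := one_le_pow₀ (by push_cast; linarith [k.cast_nonneg (α := ℝ)])
    calc ‖y‖ ^ k / ((k + 1 : ℕ) : ℝ) ^ n ≤ ‖y‖ ^ k := div_le_self (by positivity) h1
      _ ≤ r ^ k := by gcongr
  · simpa using lt_of_le_of_lt (norm_nonneg z) hzr
  · simp
  · simpa using hzr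

/-- Duplication, coming from the cancellation of the odd terms. -/
lemma Li_sq {n : ℕ} (hn : 2 ≤ n) {z : ℂ} (hz : ‖z‖ ≤ 1) :
    2 * Li n (z ^ 2) = 2 ^ n * (Li n z + Li n (-z)) := by
  have hs := (summable_Li hn hz).hasSum.add
    (summable_Li hn (z := -z) (by simpa using hz)).hasSum
  have hinj : Function.Injective fun j : ℕ => 2 * j + 1 := fun a b h => by simpa using h
  rw [← hinj.hasSum_iff] at hs
  · have h2 : HasSum (fun j : ℕ => 2 / 2 ^ n * ((z ^ 2) ^ (j + 1) / ((j + 1 : ℕ) : ℂ) ^ n))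
        (2 / 2 ^ n * Li n (z ^ 2)) :=
      (summable_Li hn (z := z ^ 2)
        (by rw [norm_pow]; exact pow_le_one₀ (norm_nonneg _) hz)).hasSum.mul_left _
    have := h2.unique (hs.congr_fun ?_)
    · rw [← Li, ← Li] at this
      rw [← this]; field_simp
    · intro j
      have h1 : 2 * j + 1 + 1 = 2 * (j + 1) := by ring
      simp only [Function.comp, h1, pow_mul, neg_sq, Nat.cast_mul, mul_pow, Nat.cast_ofNat]
      field_simp; ring
  · intro k hk
    have : Odd (k + 1) := by
      by_contra h
      rw [Nat.not_odd_iff_even] at h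
      obtain ⟨m, hm⟩ := h
      exact hk ⟨m - 1, by dsimp only; omega⟩
    simp [this.neg_pow, neg_div]

/-- Triplication at the point `1`. -/
lemma Li_cube_root {n : ℕ} (hn : 2 ≤ n) {w : ℂ} (hw : 1 + w + w ^ 2 = 0) (hn1 : ‖w‖ ≤ 1) :
    3 * Li n 1 = 3 ^ n * (Li n 1 + Li n w + Li n (w ^ 2)) := by
  have hs := ((summable_Li hn (z := 1) (by simp)).hasSum.add (summable_Li hn hn1).hasSum).add
    (summable_Li hn (z := w ^ 2)
      (by rw [norm_pow]; exact pow_le_one₀ (norm_nonneg _) hn1)).hasSum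
  have hw3 : w ^ 3 = 1 := by linear_combination (w - 1) * hw
  have hinj : Function.Injective fun j : ℕ => 3 * j + 2 := fun a b h => by simpa using h
  rw [← hinj.hasSum_iff] at hs
  · have h2 : HasSum (fun j : ℕ => 3 / 3 ^ n * ((1 : ℂ) ^ (j + 1) / ((j + 1 : ℕ) : ℂ) ^ n))
        (3 / 3 ^ n * Li n 1) :=
      (summable_Li hn (z := 1) (by simp)).hasSum.mul_left _
    have := h2.unique (hs.congr_fun ?_)
    · rw [← Li, ← Li, ← Li] at this
      rw [← this]; field_simp
    · intro j
      have h1 : 3 * j + 2 + 1 = 3 * (j + 1) := by ring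
      have h3 : w ^ (3 * (j + 1)) = 1 := by rw [pow_mul, hw3, one_pow]
      have h4 : (w ^ 2) ^ (3 * (j + 1)) = 1 := by rw [← pow_mul, mul_comm, pow_mul, h3, one_pow]
      simp only [Function.comp, h1, h3, h4, Nat.cast_mul, mul_pow, Nat.cast_ofNat, one_pow]
      field_simp; ring
  · intro k hk
    have hk3 : k % 3 = 0 ∨ k % 3 = 1 := by
      by_contra h
      exact hk ⟨k / 3, by dsimp only; omega⟩
    have hz : (1 : ℂ) ^ (k + 1) + w ^ (k + 1) + (w ^ 2) ^ (k + 1) = 0 := by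
      rcases hk3 with h | h
      · obtain ⟨m, rfl⟩ : ∃ m, k = 3 * m := ⟨k / 3, by omega⟩
        have h5 : w ^ (3 * m + 1) = w := by rw [pow_succ, pow_mul, hw3, one_pow, one_mul]
        rw [← pow_mul, mul_comm 2, pow_mul, h5, one_pow, hw]
      · obtain ⟨m, rfl⟩ : ∃ m, k = 3 * m + 1 := ⟨k / 3, by omega⟩
        have h5 : w ^ (3 * m + 1 + 1) = w ^ 2 := by
          rw [add_assoc, pow_add, pow_mul, hw3, one_pow, one_mul]
        rw [← pow_mul, mul_comm 2, pow_mul, h5, one_pow]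
        linear_combination hw + w * hw3
    rw [← add_div, ← add_div, hz, zero_div]

/-! ### Continuity and differentiation of the modified dilogarithms and trilogarithm -/

/-- The single-valued trilogarithm, on the closed unit disc. Since `Real.log 0 = 0`, the formula
also gives the continuous extension to `0` and `1`. -/
noncomputable def M (z : ℂ) : ℝ :=
  (Li 3 z).re - Real.log ‖z‖ * (Li 2 z).re - Real.log ‖z‖ ^ 2 * Real.log ‖1 - z‖ / 3

/-- The Bloch–Wigner dilogarithm, on the closed unit disc. -/
noncomputable def D (z : ℂ) : ℝ := (Li 2 z).im + Real.log ‖z‖ * (1 - z).arg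

/-- The real part of the dilogarithm with Rogers' normalisation, on the closed unit disc. -/
noncomputable def R (z : ℂ) : ℝ := (Li 2 z).re + Real.log ‖z‖ * Real.log ‖1 - z‖ / 2

lemma abs_log_norm_le {z : ℂ} (hz : ‖z‖ ≤ 1 / 2) : |Real.log ‖1 - z‖| ≤ 3 / 2 * ‖z‖ := by
  have h := Complex.norm_log_one_add_half_le_self (z := -z) (by simpa using hz)
  rw [← Complex.log_re, sub_eq_add_neg]
  exact (Complex.abs_re_le_norm _).trans (by simpa using h)

lemma abs_arg_le {z : ℂ} (hz : ‖z‖ ≤ 1 / 2) : |(1 - z).arg| ≤ 3 / 2 * ‖z‖ := by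
  have h := Complex.norm_log_one_add_half_le_self (z := -z) (by simpa using hz)
  rw [← Complex.log_im, sub_eq_add_neg]
  exact (Complex.abs_im_le_norm _).trans (by simpa using h)

lemma norm_Li_two_le {z : ℂ} (hz : ‖z‖ ≤ 1) :
    ‖Li 2 z‖ ≤ (∑' k : ℕ, (1 : ℝ) / ((k + 1 : ℕ) : ℝ) ^ 2) * ‖z‖ := by
  refine tsum_of_norm_bounded ((summable_bound le_rfl).hasSum.mul_right ‖z‖) fun k => ?_
  rw [norm_div, norm_pow, norm_pow, Complex.norm_natCast, div_mul_eq_mul_div, one_mul]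
  gcongr
  rw [pow_succ]
  exact mul_le_of_le_one_left (norm_nonneg _) (pow_le_one₀ (norm_nonneg _) hz)

open Filter Topology

/-- The logarithmic singularity at `0` is removable after multiplication by `g = O(z)`. -/
lemma continuousAt_log_mul {g : ℂ → ℝ} {s : Set ℂ} {C : ℝ} (hg : ∀ᶠ z in 𝓝[s] 0, |g z| ≤ C * ‖z‖) :
    ContinuousWithinAt (fun z => Real.log ‖z‖ * g z) s 0 := by
  have h1 : Tendsto (fun z : ℂ => C * |‖z‖ * Real.log ‖z‖|) (𝓝[s] 0) (𝓝 0) := by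
    have : Continuous fun z : ℂ => C * |‖z‖ * Real.log ‖z‖| :=
      ((Real.continuous_mul_log.comp continuous_norm).abs).const_mul C
    simpa using (this.tendsto 0).mono_left nhdsWithin_le_nhds
  have h2 : Tendsto (fun z => Real.log ‖z‖ * g z) (𝓝[s] 0) (𝓝 0) := by
    refine squeeze_zero_norm' ?_ h1
    filter_upwards [hg] with z hz
    rw [Real.norm_eq_abs, abs_mul, abs_mul, abs_norm]
    nlinarith [abs_nonneg (Real.log ‖z‖), mul_le_mul_of_nonneg_left hz (abs_nonneg (Real.log ‖z‖))]
  simpa [ContinuousWithinAt] using h2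

lemma eventually_norm_le (s : Set ℂ) : ∀ᶠ z in 𝓝[s] (0 : ℂ), ‖z‖ ≤ 1 / 2 :=
  nhdsWithin_le_nhds (Filter.mem_of_superset
    (Metric.closedBall_mem_nhds (0 : ℂ) (by norm_num : (0 : ℝ) < 1 / 2))
    (by intro z hz; simpa using hz))

lemma continuousAt_log_norm {z : ℂ} (h : z ≠ 0) : ContinuousAt (fun z : ℂ => Real.log ‖z‖) z :=
  (Real.continuousAt_log (norm_ne_zero_iff.2 h)).comp continuous_norm.continuousAt

lemma continuousAt_log_norm_one_sub {z : ℂ} (h : z ≠ 1) :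
    ContinuousAt (fun z : ℂ => Real.log ‖1 - z‖) z :=
  ContinuousAt.comp (f := fun z : ℂ => 1 - z) (g := fun z : ℂ => Real.log ‖z‖)
    (continuousAt_log_norm (sub_ne_zero.2 h.symm)) (by fun_prop)

lemma continuousAt_log_mul_log_zero : ContinuousAt (fun z : ℂ => Real.log ‖z‖ * Real.log ‖1 - z‖) 0 := by
  rw [← continuousWithinAt_univ]
  refine continuousAt_log_mul (C := 3 / 2) ?_
  filter_upwards [eventually_norm_le _] with z hz using abs_log_norm_le hz

lemma continuous_log_mul_log : Continuous fun z : ℂ => Real.log ‖z‖ * Real.log ‖1 - z‖ := by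
  rw [continuous_iff_continuousAt]
  intro z
  by_cases h0 : z = 0
  · subst h0; exact continuousAt_log_mul_log_zero
  by_cases h1 : z = 1
  · subst h1
    -- the reflection `z ↦ 1 - z` swaps the two singular points
    have h := ContinuousAt.comp (x := (1 : ℂ)) (f := fun z : ℂ => 1 - z)
      (g := fun z : ℂ => Real.log ‖z‖ * Real.log ‖1 - z‖)
      (by simpa using continuousAt_log_mul_log_zero) (by fun_prop)
    convert h using 2 with z
    simp [mul_comm]
  · exact (continuousAt_log_norm h0).mul (continuousAt_log_norm_one_sub h1)

/-- For `z ≠ 1` in the closed disc, `1 - z` avoids the branch cut of `arg`. -/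
lemma one_sub_mem_slitPlane {z : ℂ} (hz : ‖z‖ ≤ 1) (h1 : z ≠ 1) : 1 - z ∈ Complex.slitPlane := by
  by_contra h
  rw [Complex.mem_slitPlane_iff] at h
  push Not at h
  simp only [Complex.sub_re, Complex.one_re, Complex.sub_im, Complex.one_im] at h
  have h3 := (Complex.re_le_norm z).trans hz
  exact h1 (Complex.ext (by simp; linarith) (by simp; linarith [h.2]))

lemma continuousOn_R : ContinuousOn R (Metric.closedBall 0 1) :=
  (Complex.continuous_re.comp_continuousOn (continuousOn_Li le_rfl)).add
    (continuous_log_mul_log.div_const 2).continuousOn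

lemma continuousOn_D : ContinuousOn D (Metric.closedBall 0 1) := by
  refine (Complex.continuous_im.comp_continuousOn (continuousOn_Li le_rfl)).add ?_
  intro z hz
  by_cases h0 : z = 0
  · subst h0
    refine continuousAt_log_mul (C := 3 / 2) ?_
    filter_upwards [eventually_norm_le _] with z hz using abs_arg_le hz
  by_cases h1 : z = 1
  · subst h1
    -- `arg` jumps at `1 - z = 0` but stays bounded
    have h2 : Tendsto (fun z : ℂ => |Real.log ‖z‖| * Real.pi) (𝓝[Metric.closedBall 0 1] 1) (𝓝 0) := by
      have := (((continuousAt_log_norm one_ne_zero).abs).mul_const Real.pi)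
      simpa [ContinuousWithinAt] using this.continuousWithinAt (s := Metric.closedBall 0 1)
    have h3 : Tendsto (fun z : ℂ => Real.log ‖z‖ * (1 - z).arg) (𝓝[Metric.closedBall 0 1] 1) (𝓝 0) := by
      refine squeeze_zero_norm' (Eventually.of_forall fun z => ?_) h2
      rw [Real.norm_eq_abs, abs_mul]
      gcongr
      exact Complex.abs_arg_le_pi _
    simpa [ContinuousWithinAt] using h3
  · refine ((continuousAt_log_norm h0).mul ?_).continuousWithinAt
    exact ContinuousAt.comp (f := fun z : ℂ => 1 - z) (g := Complex.arg)
      (Complex.continuousAt_arg (one_sub_mem_slitPlane (by simpa using hz) h1)) (by fun_prop)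

lemma continuousOn_M : ContinuousOn M (Metric.closedBall 0 1) := by
  refine ((Complex.continuous_re.comp_continuousOn (continuousOn_Li (by norm_num))).sub ?_).sub ?_
  · intro z hz
    by_cases h0 : z = 0
    · subst h0
      refine continuousAt_log_mul (C := ∑' k : ℕ, (1 : ℝ) / ((k + 1 : ℕ) : ℝ) ^ 2) ?_
      filter_upwards [self_mem_nhdsWithin] with z hz
      exact (Complex.abs_re_le_norm _).trans (norm_Li_two_le (by simpa using hz))
    · exact (continuousAt_log_norm h0).continuousWithinAt.mul
        ((Complex.continuous_re.comp_continuousOn (continuousOn_Li le_rfl)) z hz)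
  · refine (continuous_iff_continuousAt.2 fun z => ?_).continuousOn
    refine ContinuousAt.div_const ?_ 3
    by_cases h0 : z = 0
    · subst h0
      -- `‖z‖ log² ‖z‖ = 4 (x log x)²` with `x = √‖z‖`
      have h1 : Tendsto (fun z : ℂ => 6 * (√‖z‖ * Real.log √‖z‖) ^ 2) (𝓝 0) (𝓝 0) := by
        have : Continuous fun z : ℂ => 6 * (√‖z‖ * Real.log √‖z‖) ^ 2 :=
          ((Real.continuous_mul_log.comp (Real.continuous_sqrt.comp continuous_norm)).pow 2).const_mul 6
        simpa using this.tendsto 0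
      have h2 : Tendsto (fun z : ℂ => Real.log ‖z‖ ^ 2 * Real.log ‖1 - z‖) (𝓝 0) (𝓝 0) := by
        refine squeeze_zero_norm' ?_ h1
        have := eventually_norm_le Set.univ
        rw [nhdsWithin_univ] at this
        filter_upwards [this] with z hz
        rw [Real.norm_eq_abs, abs_mul, abs_of_nonneg (sq_nonneg _), Real.log_sqrt (norm_nonneg _),
          mul_pow, Real.sq_sqrt (norm_nonneg _)]
        nlinarith [mul_le_mul_of_nonneg_left (abs_log_norm_le hz) (sq_nonneg (Real.log ‖z‖))]
      simpa [ContinuousAt] using h2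
    · have := (continuousAt_log_norm h0).mul (continuous_log_mul_log.continuousAt (x := z))
      refine this.congr (Eventually.of_forall fun z => ?_)
      simp only [Pi.mul_apply]
      ring

/-- `HasLogDeriv f w s`: the function `f` is nonzero and differentiable at `s`, with logarithmic
derivative `w`. -/
def HasLogDeriv (f : ℝ → ℂ) (w : ℂ) (s : ℝ) : Prop := f s ≠ 0 ∧ HasDerivAt f (f s * w) s

namespace HasLogDeriv

variable {f g : ℝ → ℂ} {w v : ℂ} {s : ℝ}

lemma mul (hf : HasLogDeriv f w s) (hg : HasLogDeriv g v s) :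
    HasLogDeriv (fun t => f t * g t) (w + v) s :=
  ⟨mul_ne_zero hf.1 hg.1, (hf.2.mul hg.2).congr_deriv (by ring)⟩

lemma div (hf : HasLogDeriv f w s) (hg : HasLogDeriv g v s) :
    HasLogDeriv (fun t => f t / g t) (w - v) s :=
  ⟨div_ne_zero hf.1 hg.1, by
    have := hg.1
    exact (hf.2.div hg.2 hg.1).congr_deriv (by field_simp)⟩

lemma const_mul (hf : HasLogDeriv f w s) {c : ℂ} (hc : c ≠ 0) :
    HasLogDeriv (fun t => c * f t) w s :=
  ⟨mul_ne_zero hc hf.1, (hf.2.const_mul c).congr_deriv (by ring)⟩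

lemma neg (hf : HasLogDeriv f w s) : HasLogDeriv (fun t => -f t) w s := by
  simpa using hf.const_mul (c := -1) (by norm_num)

lemma pow (hf : HasLogDeriv f w s) (n : ℕ) : HasLogDeriv (fun t => f t ^ n) (n * w) s := by
  refine ⟨pow_ne_zero n hf.1, ?_⟩
  refine (hf.2.pow n).congr_deriv ?_
  cases n with
  | zero => simp
  | succ m => simp only [Nat.add_sub_cancel, pow_succ]; ring

lemma inv (hf : HasLogDeriv f w s) : HasLogDeriv (fun t => (f t)⁻¹) (-w) s :=
  ⟨inv_ne_zero hf.1, by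
    have := hf.1
    exact (hf.2.inv hf.1).congr_deriv (by field_simp)⟩

lemma congr (hf : HasLogDeriv f w s) (h : ∀ᶠ t in 𝓝 s, g t = f t) : HasLogDeriv g w s := by
  have h0 : g s = f s := h.self_of_nhds
  exact ⟨h0 ▸ hf.1, h0 ▸ hf.2.congr_of_eventuallyEq h⟩

lemma eventually_ne (hf : HasLogDeriv f w s) : ∀ᶠ t in 𝓝 s, f t ≠ 0 :=
  hf.2.continuousAt.eventually_ne hf.1

lemma of_hasDerivAt {f' : ℂ} (h : HasDerivAt f f' s) (h0 : f s ≠ 0) :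
    HasLogDeriv f (f' / f s) s := ⟨h0, h.congr_deriv (by field_simp)⟩

/-- `log ‖f‖` is differentiable wherever `f ≠ 0`, also on the branch cut of `Complex.log`. -/
lemma log_norm (hf : HasLogDeriv f w s) : HasDerivAt (fun t => Real.log ‖f t‖) w.re s := by
  -- near `s` the quotient `f t / f s` is close to `1`, where the principal logarithm is smooth
  have h1 : HasDerivAt (fun t => f t / f s) w s := by
    have h0 := hf.1
    exact (hf.2.div_const (f s)).congr_deriv (by field_simp)
  have h2 := h1.clog_real (by simp [hf.1])
  rw [div_self hf.1, div_one] at h2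
  have h3 : HasDerivAt (fun t => (Complex.log (f t / f s)).re) w.re s := by
    exact Complex.reCLM.hasFDerivAt.comp_hasDerivAt s h2
  refine (h3.add_const (Real.log ‖f s‖)).congr_of_eventuallyEq ?_
  filter_upwards [hf.2.continuousAt.eventually_ne hf.1] with t ht
  rw [Complex.log_re, norm_div, Real.log_div (norm_ne_zero_iff.2 ht) (norm_ne_zero_iff.2 hf.1)]
  ring

lemma arg (hf : HasLogDeriv f w s) (h : f s ∈ Complex.slitPlane) :
    HasDerivAt (fun t => (f t).arg) w.im s := by
  have h2 := hf.2.clog_real h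
  rw [mul_div_cancel_left₀ _ hf.1] at h2
  exact (Complex.imCLM.hasFDerivAt.comp_hasDerivAt s h2).congr_of_eventuallyEq
    (Eventually.of_forall fun t => (Complex.log_im _).symm)

lemma comp_Li (hf : HasLogDeriv f w s) (hn : ‖f s‖ < 1) (n : ℕ) :
    HasDerivAt (fun t => Li (n + 1) (f t)) (Li n (f s) * w) s := by
  have := (hasDerivAt_Li n hn hf.1).scomp s hf.2
  have h0 := hf.1
  refine this.congr_deriv ?_
  rw [smul_eq_mul]; field_simp

/-- The non-elementary part of the derivative cancels: `d D = log ‖f‖ d arg (1 - f) -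
log ‖1 - f‖ d arg f`. -/
lemma comp_D (hf : HasLogDeriv f w s) (hg : HasLogDeriv (fun t => 1 - f t) v s) (hn : ‖f s‖ < 1) :
    HasDerivAt (fun t => D (f t)) (Real.log ‖f s‖ * v.im - Real.log ‖1 - f s‖ * w.im) s := by
  have hs : 1 - f s ∈ Complex.slitPlane := one_sub_mem_slitPlane hn.le
    (by intro h; simp [h] at hn)
  have h1 : HasDerivAt (fun t => (Li 2 (f t)).im) (Li 1 (f s) * w).im s :=
    Complex.imCLM.hasFDerivAt.comp_hasDerivAt s (hf.comp_Li hn 1)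
  refine (h1.add (hf.log_norm.mul (hg.arg hs))).congr_deriv ?_
  rw [Li_one hn]
  simp only [Complex.mul_im, Complex.neg_re, Complex.neg_im, Complex.log_re, Complex.log_im]
  ring

/-- The normalisation makes the logarithmic terms antisymmetric in `f` and `1 - f`; one term in
`arg (1 - f)` survives. -/
lemma comp_R (hf : HasLogDeriv f w s) (hg : HasLogDeriv (fun t => 1 - f t) v s) (hn : ‖f s‖ < 1) :
    HasDerivAt (fun t => R (f t)) ((Real.log ‖f s‖ * v.re - Real.log ‖1 - f s‖ * w.re) / 2
      + (1 - f s).arg * w.im) s := by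
  have h1 : HasDerivAt (fun t => (Li 2 (f t)).re) (Li 1 (f s) * w).re s :=
    Complex.reCLM.hasFDerivAt.comp_hasDerivAt s (hf.comp_Li hn 1)
  refine (h1.add ((hf.log_norm.mul hg.log_norm).div_const 2)).congr_deriv ?_
  rw [Li_one hn]
  simp only [Complex.mul_re, Complex.neg_re, Complex.neg_im, Complex.log_re, Complex.log_im]
  ring

/-- The derivative of `M` involves no dilogarithm other than `D`. -/
lemma comp_M (hf : HasLogDeriv f w s) (hg : HasLogDeriv (fun t => 1 - f t) v s) (hn : ‖f s‖ < 1) :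
    HasDerivAt (fun t => M (f t)) (-(D (f s)) * w.im + Real.log ‖f s‖ *
      (Real.log ‖1 - f s‖ * w.re - Real.log ‖f s‖ * v.re) / 3) s := by
  have h2 : HasDerivAt (fun t => (Li 2 (f t)).re) (Li 1 (f s) * w).re s :=
    Complex.reCLM.hasFDerivAt.comp_hasDerivAt s (hf.comp_Li hn 1)
  have h3 : HasDerivAt (fun t => (Li 3 (f t)).re) (Li 2 (f s) * w).re s :=
    Complex.reCLM.hasFDerivAt.comp_hasDerivAt s (hf.comp_Li hn 2)
  refine ((h3.sub (hf.log_norm.mul h2)).sub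
    (((hf.log_norm.pow 2).mul hg.log_norm).div_const 3)).congr_deriv ?_
  rw [Li_one hn, D]
  simp only [Complex.mul_re, Complex.neg_re, Complex.neg_im, Complex.log_re, Complex.log_im,
    Pi.pow_apply]
  ring

end HasLogDeriv

/-! ### Functional equations along curves -/

lemma eq_of_deriv_zero {F : ℝ → ℝ} {a b : ℝ} (hab : a < b) (hc : ContinuousOn F (Set.Icc a b))
    (hd : ∀ s ∈ Set.Ioo a b, HasDerivAt F 0 s) : F b = F a := by
  obtain ⟨c, -, h⟩ := exists_hasDerivAt_eq_slope F (fun _ => 0) hab hc hd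
  rcases div_eq_zero_iff.1 h.symm with h | h <;> linarith

lemma continuousOn_comp_disc {G : ℂ → ℝ} (hG : ContinuousOn G (Metric.closedBall 0 1)) {f : ℝ → ℂ}
    {S : Set ℝ} (hf : ContinuousOn f S) (hn : ∀ s ∈ S, ‖f s‖ ≤ 1) :
    ContinuousOn (fun s => G (f s)) S :=
  hG.comp hf fun s hs => by simpa using hn s hs

lemma log_norm_mul {z w : ℂ} (hz : z ≠ 0) (hw : w ≠ 0) :
    Real.log ‖z * w‖ = Real.log ‖z‖ + Real.log ‖w‖ := by
  rw [norm_mul, Real.log_mul (norm_ne_zero_iff.2 hz) (norm_ne_zero_iff.2 hw)]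

lemma log_norm_div {z w : ℂ} (hz : z ≠ 0) (hw : w ≠ 0) :
    Real.log ‖z / w‖ = Real.log ‖z‖ - Real.log ‖w‖ := by
  rw [norm_div, Real.log_div (norm_ne_zero_iff.2 hz) (norm_ne_zero_iff.2 hw)]

lemma log_norm_pow (z : ℂ) (n : ℕ) : Real.log ‖z ^ n‖ = n * Real.log ‖z‖ := by
  rw [norm_pow, Real.log_pow]

lemma one_sub_re_pos {z : ℂ} (hz : ‖z‖ < 1) : 0 < (1 - z).re := by
  have := Complex.re_le_norm z
  simp only [Complex.sub_re, Complex.one_re]; linarith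

lemma arg_mul_of_re_pos {z w : ℂ} (hz : 0 < z.re) (hw : 0 < w.re) :
    (z * w).arg = z.arg + w.arg := by
  have h1 := abs_lt.1 (Complex.abs_arg_lt_pi_div_two_iff.2 (Or.inl hz))
  have h2 := abs_lt.1 (Complex.abs_arg_lt_pi_div_two_iff.2 (Or.inl hw))
  refine Complex.arg_mul ?_ ?_ ⟨by linarith, by linarith⟩
  · rintro rfl; simp at hz
  · rintro rfl; simp at hw

lemma hasLogDeriv_ray {z : ℂ} (hz : z ≠ 0) {s : ℝ} (hs : s ≠ 0) :
    HasLogDeriv (fun t : ℝ => (t : ℂ) * z) (((s⁻¹ : ℝ) : ℂ)) s := by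
  have hs' : (s : ℂ) ≠ 0 := Complex.ofReal_ne_zero.2 hs
  refine ⟨mul_ne_zero hs' hz, ((Complex.ofRealCLM.hasDerivAt (x := s)).mul_const z).congr_deriv ?_⟩
  simp only [Complex.ofRealCLM_apply, Complex.ofReal_one, Complex.ofReal_inv]
  field_simp

lemma exists_hasLogDeriv {f : ℝ → ℂ} {s : ℝ} (hf : DifferentiableAt ℝ f s) (h0 : f s ≠ 0) :
    ∃ w, HasLogDeriv f w s :=
  ⟨_, HasLogDeriv.of_hasDerivAt hf.hasDerivAt h0⟩

lemma norm_lt_iff_sq {z w : ℂ} : ‖z‖ < ‖w‖ ↔ z.re ^ 2 + z.im ^ 2 < w.re ^ 2 + w.im ^ 2 := by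
  rw [← sq_lt_sq₀ (norm_nonneg _) (norm_nonneg _), Complex.sq_norm, Complex.sq_norm,
    Complex.normSq_apply, Complex.normSq_apply]
  simp only [← sq]

lemma landen_norms {z : ℂ} (hre : z.re = 1 / 2) (hz : ‖z‖ < 1) {s : ℝ} (hs : s ∈ Set.Ioo (0 : ℝ) 1) :
    ‖(s : ℂ) * z‖ < 1 ∧ ‖1 - (s : ℂ) * z‖ < 1 ∧ ‖(s : ℂ) * z‖ < ‖1 - (s : ℂ) * z‖ := by
  obtain ⟨h0, h1⟩ := hs
  have hz' : z.re ^ 2 + z.im ^ 2 < 1 := by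
    simpa using (norm_lt_iff_sq (z := z) (w := 1)).1 (by simpa using hz)
  rw [hre] at hz'
  refine ⟨?_, ?_, ?_⟩
  · rw [norm_mul, Complex.norm_real, Real.norm_of_nonneg h0.le]
    nlinarith [norm_nonneg z]
  · have := (norm_lt_iff_sq (z := 1 - (s : ℂ) * z) (w := 1)).2
      (by simp [hre]; nlinarith [mul_pos h0 h0])
    simpa using this
  · rw [norm_lt_iff_sq]
    simp [hre]
    nlinarith

lemma D_zero : D 0 = 0 := by simp [D, Li_zero]

lemma D_conj {z : ℂ} (h : ‖z‖ = 1) : D ((starRingEnd ℂ) z) = -D z := by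
  simp [D, Li_conj, h]

lemma D_one : D 1 = 0 := by
  have := D_conj (z := 1) (by simp)
  rw [map_one] at this
  linarith

lemma D_neg_one : D (-1) = 0 := by
  have := D_conj (z := -1) (by simp)
  rw [map_neg, map_one] at this
  linarith

lemma norm_le_one_of_Ioo {a b : ℝ} (hab : a < b) {g : ℝ → ℂ} (hg : ContinuousOn g (Set.Icc a b))
    (h : ∀ s ∈ Set.Ioo a b, ‖g s‖ < 1) : ∀ s ∈ Set.Icc a b, ‖g s‖ ≤ 1 := fun s hs => by
  have : Set.Icc a b = closure (Set.Ioo a b) := (closure_Ioo hab.ne).symm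
  rw [this] at hg hs
  exact le_on_closure (fun x hx => (h x hx).le) hg.norm continuousOn_const hs

lemma M_zero : M 0 = 0 := by simp [M, Li_zero]
lemma R_zero : R 0 = 0 := by simp [R, Li_zero]

/-! ### Landen's equations -/

/-- Landen's functional equations at a point of the line `Re z = 1/2`, obtained by integrating
along the segment from `0` to `z`. -/
lemma landen {z : ℂ} (hre : z.re = 1 / 2) (hz : ‖z‖ < 1) :
    M z + M (1 - z) + M (-z / (1 - z)) = M 0 + M 1 + M 0 ∧
    R z + R (1 - z) - z.arg * (1 - z).arg = R 0 + R 1 := by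
  have hz0 : z ≠ 0 := by rintro rfl; norm_num at hre
  set f : ℝ → ℂ := fun t => (t : ℂ) * z with hf
  set o : ℝ → ℂ := fun t => 1 - (t : ℂ) * z with ho
  set q : ℝ → ℂ := fun t => -f t / o t with hq
  have ho_re : ∀ s ∈ Set.Icc (0 : ℝ) 1, 0 < (o s).re := fun s hs => by
    simp [ho, hre]; linarith [hs.2]
  have ho0 : ∀ s ∈ Set.Icc (0 : ℝ) 1, o s ≠ 0 := fun s hs h => by
    have := ho_re s hs; simp [h] at this
  have cf : Continuous f := by fun_prop
  have co : Continuous o := by fun_prop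
  have cq : ContinuousOn q (Set.Icc 0 1) := cf.neg.continuousOn.div co.continuousOn ho0
  have hn : ∀ s ∈ Set.Ioo (0 : ℝ) 1, ‖f s‖ < 1 ∧ ‖o s‖ < 1 ∧ ‖q s‖ < 1 := fun s hs => by
    obtain ⟨h1, h2, h3⟩ := landen_norms hre hz hs
    refine ⟨h1, h2, ?_⟩
    rw [hq]; dsimp only
    rw [norm_div, norm_neg, div_lt_one ((norm_nonneg _).trans_lt h3)]
    exact h3
  have nf := norm_le_one_of_Ioo one_pos cf.continuousOn fun s hs => (hn s hs).1
  have no := norm_le_one_of_Ioo one_pos co.continuousOn fun s hs => (hn s hs).2.1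
  have nq := norm_le_one_of_Ioo one_pos cq fun s hs => (hn s hs).2.2
  have hld : ∀ s ∈ Set.Ioo (0 : ℝ) 1, ∃ (x : ℝ) (μ : ℂ), HasLogDeriv f x s ∧ HasLogDeriv o μ s ∧
      HasLogDeriv (fun t => 1 - f t) μ s ∧ HasLogDeriv (fun t => 1 - o t) x s ∧
      HasLogDeriv q (x - μ) s ∧ HasLogDeriv (fun t => 1 - q t) (-μ) s ∧
      Real.log ‖q s‖ = Real.log ‖f s‖ - Real.log ‖o s‖ ∧
      Real.log ‖1 - q s‖ = -Real.log ‖o s‖ ∧ 1 - f s = o s ∧ 1 - o s = f s := fun s hs => by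
    have h1 := hasLogDeriv_ray hz0 hs.1.ne'
    have hs0 := ho0 s (Set.Ioo_subset_Icc_self hs)
    obtain ⟨μ, h2⟩ := exists_hasLogDeriv (f := o) (s := s)
      (((Complex.ofRealCLM.differentiableAt).mul_const z).const_sub 1) hs0
    have h3 : ∀ t, o t ≠ 0 → 1 - q t = (o t)⁻¹ := fun t ht => by
      have e1 : 1 - q t = (o t + f t) / o t := by rw [hq]; dsimp only; field_simp; ring
      rw [e1, show o t + f t = 1 by simp [ho, hf], one_div]
    refine ⟨s⁻¹, μ, h1, h2, h2, h1.congr (.of_forall fun t => by simp [ho]), h1.neg.div h2,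
      h2.inv.congr (h2.eventually_ne.mono h3), ?_, ?_, rfl, by simp [ho, hf]⟩
    · rw [hq]; dsimp only
      rw [log_norm_div (neg_ne_zero.2 h1.1) h2.1, norm_neg]
    · rw [h3 s hs0, norm_inv, Real.log_inv]
  have f0 : f 0 = 0 := by simp [hf]
  have o0 : o 0 = 1 := by simp [ho]
  have q0 : q 0 = 0 := by simp [hq, hf]
  have f1 : f 1 = z := by simp [hf]
  have o1 : o 1 = 1 - z := by simp [ho]
  have q1 : q 1 = -z / (1 - z) := by simp [hq, hf, ho]
  have hD : ∀ s ∈ Set.Ioo (0 : ℝ) 1, D (o s) = D (q s) := fun s hs => by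
    have h := eq_of_deriv_zero (F := fun t => D (o t) - D (q t)) hs.1
      (((continuousOn_comp_disc continuousOn_D co.continuousOn no).sub
        (continuousOn_comp_disc continuousOn_D cq nq)).mono (Set.Icc_subset_Icc_right hs.2.le))
      fun t ht => by
        have ht' : t ∈ Set.Ioo (0 : ℝ) 1 := ⟨ht.1, ht.2.trans hs.2⟩
        obtain ⟨x, μ, h1, h2, h3, h4, h5, h6, e1, e2, e3, e4⟩ := hld t ht'
        refine ((h2.comp_D h4 (hn t ht').2.1).sub (h5.comp_D h6 (hn t ht').2.2)).congr_deriv ?_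
        rw [e1, e2, e4]
        simp
        ring
    simp only [o0, q0, D_zero, D_one] at h
    linarith
  constructor
  · have h := eq_of_deriv_zero (F := fun t => M (f t) + M (o t) + M (q t)) one_pos
      (((continuousOn_comp_disc continuousOn_M cf.continuousOn nf).add
        (continuousOn_comp_disc continuousOn_M co.continuousOn no)).add
        (continuousOn_comp_disc continuousOn_M cq nq))
      fun t ht => by
        obtain ⟨x, μ, h1, h2, h3, h4, h5, h6, e1, e2, e3, e4⟩ := hld t ht
        obtain ⟨n1, n2, n3⟩ := hn t ht
        refine (((h1.comp_M h3 n1).add (h2.comp_M h4 n2)).add (h5.comp_M h6 n3)).congr_deriv ?_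
        rw [e1, e2, e3, e4, hD t ht]
        simp
        ring
    simpa only [f0, o0, q0, f1, o1, q1] using h
  · have h := eq_of_deriv_zero (F := fun t => R (f t) + R (o t) - z.arg * (o t).arg) one_pos
      (((continuousOn_comp_disc continuousOn_R cf.continuousOn nf).add
        (continuousOn_comp_disc continuousOn_R co.continuousOn no)).sub
        (continuousOn_const.mul fun s hs => ((Complex.continuousAt_arg
          (Or.inl (ho_re s hs))).comp co.continuousAt).continuousWithinAt))
      fun t ht => by
        obtain ⟨x, μ, h1, h2, h3, h4, h5, h6, e1, e2, e3, e4⟩ := hld t ht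
        obtain ⟨n1, n2, n3⟩ := hn t ht
        refine (((h1.comp_R h3 n1).add (h2.comp_R h4 n2)).sub ((h2.arg
          (Or.inl (ho_re t (Set.Ioo_subset_Icc_self ht)))).const_mul z.arg)).congr_deriv ?_
        have : (f t).arg = z.arg := Complex.arg_real_mul z ht.1
        rw [e3, e4, this]
        simp
        ring
    simpa [f0, o0, f1, o1] using h

/-! ### A Kummer-type equation along a ray -/

lemma norm_half_one_add_I : ‖(1 + I) / 2‖ < 1 := by
  rw [← norm_one (α := ℂ), norm_lt_iff_sq]; norm_num

lemma arg_half_one_add_I : ((1 + I) / 2).arg = Real.pi / 4 := by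
  have h2 : (√2 : ℂ) ^ 2 = 2 := by norm_cast; simp
  have : (1 + I) / 2 = ((√2 / 2 : ℝ) : ℂ) *
      (Complex.cos ((Real.pi / 4 : ℝ) : ℂ) + Complex.sin ((Real.pi / 4 : ℝ) : ℂ) * I) := by
    rw [← Complex.ofReal_cos, ← Complex.ofReal_sin, Real.cos_pi_div_four, Real.sin_pi_div_four]
    push_cast
    linear_combination (-(1 + I) / 4) * h2
  have hpi := Real.pi_pos
  rw [this, Complex.arg_mul_cos_add_sin_mul_I (by positivity) ⟨by linarith, by linarith⟩]

/-- The equation at `a = (1 - I) / 4` between `a`, `b = -a / (1 - 2 * a)`, `p = a * b` and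
`±(1 - 2 * a)`, obtained by integrating along the ray `s * (1 - I) / 4`. Every logarithmic
derivative is a combination of those of `a` (real on a ray), `1 - a` and `1 - 2 * a`. -/
lemma kummer_ray : 
    M ((1 + I) / 8) - 4 * M ((1 - I) / 4) - 4 * M (I / 2) + 2 * M (-(1 + I) / 2)
      - 2 * M ((1 + I) / 2) = 2 * M (-1) - 2 * M 1 ∧
    R ((1 + I) / 8) - 2 * R ((1 - I) / 4) - 2 * R (I / 2) + Real.pi ^ 2 / 32 = 0 := by
  set z : ℂ := (1 - I) / 4 with hz
  have zre : z.re = 1 / 4 := by simp [hz]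
  have zim : z.im = -1 / 4 := by simp [hz]
  have hz0 : z ≠ 0 := fun h => by rw [h] at zre; norm_num at zre
  set a : ℝ → ℂ := fun t => (t : ℂ) * z with ha
  set e : ℝ → ℂ := fun t => 1 - 2 * a t with he
  set c : ℝ → ℂ := fun t => 1 - a t with hc
  set b : ℝ → ℂ := fun t => -a t / e t with hb
  set p : ℝ → ℂ := fun t => a t * b t with hp
  set m : ℝ → ℂ := fun t => -e t with hm
  have he_re : ∀ s ∈ Set.Icc (0 : ℝ) 1, 0 < (e s).re := fun s hs => by
    simp [he, ha, zre]; linarith [hs.2]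
  have hc_re : ∀ s ∈ Set.Icc (0 : ℝ) 1, 0 < (c s).re := fun s hs => by
    simp [hc, ha, zre]; linarith [hs.2]
  have he0 : ∀ s ∈ Set.Icc (0 : ℝ) 1, e s ≠ 0 := fun s hs h => by
    have := he_re s hs; simp [h] at this
  have hc0 : ∀ s ∈ Set.Icc (0 : ℝ) 1, c s ≠ 0 := fun s hs h => by
    have := hc_re s hs; simp [h] at this
  have ca : Continuous a := by fun_prop
  have ce : Continuous e := by fun_prop
  have cb : ContinuousOn b (Set.Icc 0 1) := ca.neg.continuousOn.div ce.continuousOn he0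
  have cp : ContinuousOn p (Set.Icc 0 1) := ca.continuousOn.mul cb
  have cm : Continuous m := ce.neg
  have hn : ∀ s ∈ Set.Ioo (0 : ℝ) 1, ‖a s‖ < 1 ∧ ‖e s‖ < 1 ∧ ‖b s‖ < 1 ∧ ‖p s‖ < 1 ∧ ‖m s‖ < 1 :=
    fun s hs => by
    have hs2 : 0 < s * (1 - s) := mul_pos hs.1 (by linarith [hs.2])
    have n1 : ‖a s‖ < 1 := by
      rw [← norm_one (α := ℂ), norm_lt_iff_sq]
      simp [ha, zre, zim]; nlinarith [hs.2]
    have n2 : ‖e s‖ < 1 := by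
      rw [← norm_one (α := ℂ), norm_lt_iff_sq]
      simp [he, ha, zre, zim]; nlinarith [hs.2, hs.1]
    have n3 : ‖a s‖ < ‖e s‖ := by
      rw [norm_lt_iff_sq]
      simp [he, ha, zre, zim]; nlinarith [sq_nonneg (3 * s - 4)]
    have n4 : ‖b s‖ < 1 := by
      rw [hb]; dsimp only
      rwa [norm_div, norm_neg, div_lt_one ((norm_nonneg _).trans_lt n3)]
    refine ⟨n1, n2, n4, ?_, by simpa [hm] using n2⟩
    rw [hp]; dsimp only
    rw [norm_mul]
    nlinarith [norm_nonneg (a s), norm_nonneg (b s)]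
  have na := norm_le_one_of_Ioo one_pos ca.continuousOn fun s hs => (hn s hs).1
  have ne := norm_le_one_of_Ioo one_pos ce.continuousOn fun s hs => (hn s hs).2.1
  have nb := norm_le_one_of_Ioo one_pos cb fun s hs => (hn s hs).2.2.1
  have np := norm_le_one_of_Ioo one_pos cp fun s hs => (hn s hs).2.2.2.1
  have nm := norm_le_one_of_Ioo one_pos cm.continuousOn fun s hs => (hn s hs).2.2.2.2
  have f1b : ∀ t, e t ≠ 0 → 1 - b t = c t / e t := fun t ht => by
    rw [hb, hc]; dsimp only
    rw [eq_div_iff ht, sub_mul, div_mul_cancel₀ _ ht, he]; ring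
  have f1p : ∀ t, e t ≠ 0 → 1 - p t = c t ^ 2 / e t := fun t ht => by
    rw [hp, hb, hc]; dsimp only
    rw [eq_div_iff ht, sub_mul, mul_assoc, div_mul_cancel₀ _ ht, he]; ring
  have f1e : ∀ t, 1 - e t = 2 * a t := fun t => by rw [he]; ring
  have f1m : ∀ t, 1 - m t = 2 * c t := fun t => by rw [hm, he, hc]; ring
  have hld : ∀ s ∈ Set.Ioo (0 : ℝ) 1, ∃ (x : ℝ) (ε κ : ℂ), HasLogDeriv a x s ∧
      HasLogDeriv (fun t => 1 - a t) κ s ∧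
      HasLogDeriv e ε s ∧ HasLogDeriv (fun t => 1 - e t) x s ∧
      HasLogDeriv m ε s ∧ HasLogDeriv (fun t => 1 - m t) κ s ∧
      HasLogDeriv b (x - ε) s ∧ HasLogDeriv (fun t => 1 - b t) (κ - ε) s ∧
      HasLogDeriv p (x + (x - ε)) s ∧ HasLogDeriv (fun t => 1 - p t) (2 * κ - ε) s := fun s hs => by
    have h1 := hasLogDeriv_ray hz0 hs.1.ne'
    have hs0 := he0 s (Set.Ioo_subset_Icc_self hs)
    obtain ⟨ε, h2⟩ := exists_hasLogDeriv (f := e) (s := s)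
      (((h1.2.differentiableAt).const_mul 2).const_sub 1) hs0
    obtain ⟨κ, h3⟩ := exists_hasLogDeriv (f := c) (s := s)
      ((h1.2.differentiableAt).const_sub 1) (hc0 s (Set.Ioo_subset_Icc_self hs))
    have h4 := h1.neg.div h2
    have h5 := (h3.pow 2).div h2
    exact ⟨s⁻¹, ε, κ, h1, h3, h2, (h1.const_mul two_ne_zero).congr (.of_forall f1e), h2.neg,
      (h3.const_mul two_ne_zero).congr (.of_forall f1m), h4,
      (h3.div h2).congr (h2.eventually_ne.mono f1b), h1.mul h4,
      by simpa using h5.congr (h2.eventually_ne.mono f1p)⟩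
  have hlog : ∀ s ∈ Set.Ioo (0 : ℝ) 1, ∃ A E C : ℝ,
      Real.log ‖a s‖ = A ∧ Real.log ‖1 - a s‖ = C ∧
      Real.log ‖e s‖ = E ∧ Real.log ‖1 - e s‖ = Real.log 2 + A ∧
      Real.log ‖m s‖ = E ∧ Real.log ‖1 - m s‖ = Real.log 2 + C ∧
      Real.log ‖b s‖ = A - E ∧ Real.log ‖1 - b s‖ = C - E ∧
      Real.log ‖p s‖ = A + (A - E) ∧ Real.log ‖1 - p s‖ = 2 * C - E := fun s hs => by
    have hs0 := he0 s (Set.Ioo_subset_Icc_self hs)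
    have hs1 := hc0 s (Set.Ioo_subset_Icc_self hs)
    have hs2 : a s ≠ 0 := (hasLogDeriv_ray hz0 hs.1.ne').1
    have hlb : Real.log ‖b s‖ = Real.log ‖a s‖ - Real.log ‖e s‖ := by
      rw [hb]; dsimp only
      rw [log_norm_div (neg_ne_zero.2 hs2) hs0, norm_neg]
    refine ⟨_, _, Real.log ‖c s‖, rfl, rfl, rfl, ?_, by rw [hm, norm_neg], ?_, hlb, ?_, ?_, ?_⟩
    · rw [f1e, log_norm_mul two_ne_zero hs2, Complex.norm_two]
    · rw [f1m, log_norm_mul two_ne_zero hs1, Complex.norm_two]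
    · rw [f1b s hs0, log_norm_div hs1 hs0]
    · rw [← hlb]
      exact log_norm_mul hs2 (div_ne_zero (neg_ne_zero.2 hs2) hs0)
    · rw [f1p s hs0, log_norm_div (pow_ne_zero 2 hs1) hs0, log_norm_pow]; norm_num
  have a0 : a 0 = 0 := by simp [ha]
  have e0 : e 0 = 1 := by simp [he, a0]
  have m0 : m 0 = -1 := by simp [hm, e0]
  have b0 : b 0 = 0 := by simp [hb, a0]
  have p0 : p 0 = 0 := by simp [hp, a0]
  have a1 : a 1 = z := by simp [ha]
  have e1 : e 1 = (1 + I) / 2 := by simp only [he, a1, hz]; ring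
  have m1 : m 1 = -(1 + I) / 2 := by simp only [hm, e1]; ring
  have hI : (1 + I : ℂ) ≠ 0 := fun h => by simpa using congrArg Complex.re h
  have b1 : b 1 = I / 2 := by
    simp only [hb, e1, a1, hz]; field_simp; linear_combination (-4 : ℂ) * I_sq
  have p1 : p 1 = (1 + I) / 8 := by
    simp only [hp, b1, a1, hz]; linear_combination (-1 / 8 : ℂ) * I_sq
  have hD : ∀ s ∈ Set.Ioo (0 : ℝ) 1, D (p s) = 4 * D (b s) + 2 * D (m s) - 2 * D (e s) :=
    fun s hs => by
    have h := eq_of_deriv_zero (F := fun t => D (p t) - 4 * D (b t) - 2 * D (m t) + 2 * D (e t))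
      hs.1
      ((((continuousOn_comp_disc continuousOn_D cp np).sub
        ((continuousOn_comp_disc continuousOn_D cb nb).const_mul 4)).sub
        ((continuousOn_comp_disc continuousOn_D cm.continuousOn nm).const_mul 2)).add
        ((continuousOn_comp_disc continuousOn_D ce.continuousOn ne).const_mul 2) |>.mono
          (Set.Icc_subset_Icc_right hs.2.le))
      fun t ht => by
        have ht' : t ∈ Set.Ioo (0 : ℝ) 1 := ⟨ht.1, ht.2.trans hs.2⟩
        obtain ⟨x, ε, κ, ha, ha', he, he', hm, hm', hb, hb', hp, hp'⟩ := hld t ht'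
        obtain ⟨A, E, C, l1, l2, l3, l4, l5, l6, l7, l8, l9, l10⟩ := hlog t ht'
        obtain ⟨n1, n2, n3, n4, n5⟩ := hn t ht'
        refine ((((hp.comp_D hp' n4).sub ((hb.comp_D hb' n3).const_mul 4)).sub
          ((hm.comp_D hm' n5).const_mul 2)).add ((he.comp_D he' n2).const_mul 2)).congr_deriv ?_
        rw [l3, l4, l5, l6, l7, l8, l9, l10]
        simp
        ring
    simp only [p0, b0, m0, e0, D_zero, D_one, D_neg_one] at h
    linarith
  constructor
  · have h := eq_of_deriv_zero
      (F := fun t => M (p t) - 4 * M (a t) - 4 * M (b t) + 2 * M (m t) - 2 * M (e t)) one_pos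
      (((((continuousOn_comp_disc continuousOn_M cp np).sub
        ((continuousOn_comp_disc continuousOn_M ca.continuousOn na).const_mul 4)).sub
        ((continuousOn_comp_disc continuousOn_M cb nb).const_mul 4)).add
        ((continuousOn_comp_disc continuousOn_M cm.continuousOn nm).const_mul 2)).sub
        ((continuousOn_comp_disc continuousOn_M ce.continuousOn ne).const_mul 2))
      fun t ht => by
        obtain ⟨x, ε, κ, ha, ha', he, he', hm, hm', hb, hb', hp, hp'⟩ := hld t ht
        obtain ⟨A, E, C, l1, l2, l3, l4, l5, l6, l7, l8, l9, l10⟩ := hlog t ht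
        obtain ⟨n1, n2, n3, n4, n5⟩ := hn t ht
        refine (((((hp.comp_M hp' n4).sub ((ha.comp_M ha' n1).const_mul 4)).sub
          ((hb.comp_M hb' n3).const_mul 4)).add
          ((hm.comp_M hm' n5).const_mul 2)).sub ((he.comp_M he' n2).const_mul 2)).congr_deriv ?_
        rw [l1, l2, l3, l4, l5, l6, l7, l8, l9, l10, hD t ht]
        simp
        ring
    simp only [p0, a0, b0, m0, e0, p1, a1, b1, m1, e1, M_zero] at h
    linarith
  · have h := eq_of_deriv_zero
      (F := fun t => R (p t) - 2 * R (a t) - 2 * R (b t) + (e t).arg ^ 2 / 2) one_pos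
      ((((continuousOn_comp_disc continuousOn_R cp np).sub
        ((continuousOn_comp_disc continuousOn_R ca.continuousOn na).const_mul 2)).sub
        ((continuousOn_comp_disc continuousOn_R cb nb).const_mul 2)).add
        (ContinuousOn.div_const (ContinuousOn.pow (fun s hs => ((Complex.continuousAt_arg
          (Or.inl (he_re s hs))).comp ce.continuousAt).continuousWithinAt) 2) 2))
      fun t ht => by
        have ht' := Set.Ioo_subset_Icc_self ht
        obtain ⟨x, ε, κ, ha, ha', he, he', hm, hm', hb, hb', hp, hp'⟩ := hld t ht
        obtain ⟨A, E, C, l1, l2, l3, l4, l5, l6, l7, l8, l9, l10⟩ := hlog t ht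
        obtain ⟨n1, n2, n3, n4, n5⟩ := hn t ht
        -- all factors lie in the right half plane, so the arguments add up without winding
        have q1 : (1 - b t).arg + (e t).arg = (c t).arg := by
          rw [← arg_mul_of_re_pos (one_sub_re_pos n3) (he_re t ht'), f1b t (he0 t ht'),
            div_mul_cancel₀ _ (he0 t ht')]
        have q2 : (1 - p t).arg = (c t).arg + (1 - b t).arg := by
          rw [← arg_mul_of_re_pos (hc_re t ht') (one_sub_re_pos n3), f1b t (he0 t ht'),
            f1p t (he0 t ht')]
          congr 1; ring
        have q3 : (1 - a t).arg = (c t).arg := rfl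
        refine ((((hp.comp_R hp' n4).sub ((ha.comp_R ha' n1).const_mul 2)).sub
          ((hb.comp_R hb' n3).const_mul 2)).add
          (((he.arg (Or.inl (he_re t ht'))).pow 2).div_const 2)).congr_deriv ?_
        rw [l1, l2, l7, l8, l9, l10, q2, q3, ← q1]
        simp
        ring
    simp only [p0, a0, b0, e0, p1, a1, b1, e1, arg_half_one_add_I, R_zero, Complex.arg_one] at h
    linarith

/-! ### A Kummer-type equation along the line `Re u = -1/2` -/

lemma cube_root_facts {w : ℂ} (hw : w = ((-1 / 2 : ℝ) : ℂ) + ((√3 / 2 : ℝ) : ℂ) * I) :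
    1 + w + w ^ 2 = 0 ∧ w ^ 2 = (starRingEnd ℂ) w ∧ w ^ 3 = 1 ∧ ‖w‖ = 1 := by
  have h3 : (√3 : ℂ) ^ 2 = 3 := by norm_cast; simp
  have w0 : 1 + w + w ^ 2 = 0 := by
    rw [hw]; push_cast; linear_combination (√3 : ℂ) ^ 2 / 4 * I_sq - h3 / 4
  have w3 : w ^ 3 = 1 := by linear_combination (w - 1) * w0
  refine ⟨w0, ?_, w3, (pow_eq_one_iff_of_nonneg (norm_nonneg w) three_ne_zero).1
    (by rw [← norm_pow, w3, norm_one])⟩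
  have : (starRingEnd ℂ) w = -1 - w := by
    rw [hw, map_add, map_mul, Complex.conj_I, Complex.conj_ofReal, Complex.conj_ofReal]
    push_cast; ring
  rw [this]; linear_combination w0

set_option maxHeartbeats 1000000 in
/-- The equation between `u`, `u ^ 2`, `u ^ 3`, `v = -u ^ 2 / (1 + u)` and
`r = -u * (1 + u) = ‖u‖ ^ 2`, obtained by integrating along `Re u = -1/2` from `(-1 + I) / 2` to the
cube root of unity `w`, where `u ^ 3 = v = r = 1`. -/
lemma kummer_line {w : ℂ} (hw : w = ((-1 / 2 : ℝ) : ℂ) + ((√3 / 2 : ℝ) : ℂ) * I) :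
    M ((1 + I) / 4) - 3 * M ((-1 + I) / 2) - 3 / 2 * M (-I / 2) - M ((1 + I) / 2)
      - 2 * M (1 / 2) = M 1 - 3 * M w - 3 / 2 * M (w ^ 2) - M 1 - 2 * M 1 ∧
    R ((1 + I) / 4) - 3 * R ((-1 + I) / 2) - 3 / 2 * R (1 / 2)
      = R 1 - 3 * R w - 3 / 2 * R 1 := by
  set β : ℝ := √3 / 2 with hβ
  have hβ2 : β ^ 2 = 3 / 4 := by rw [hβ, div_pow, Real.sq_sqrt (by norm_num)]; norm_num
  have hβ0 : 0 < β := by positivity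
  have hαβ : 1 / 2 < β := by nlinarith
  set u : ℝ → ℂ := fun t => ((-1 / 2 : ℝ) : ℂ) + (t : ℂ) * I with hu
  set h : ℝ → ℂ := fun t => 1 + u t with hh
  set c : ℝ → ℂ := fun t => 1 - u t with hc
  -- `f t` is `1 + u t + u t ^ 2`, real on this line
  set f : ℝ → ℂ := fun t => ((3 / 4 - t ^ 2 : ℝ) : ℂ) with hf
  set v : ℝ → ℂ := fun t => -(u t ^ 2) / h t with hv
  set r : ℝ → ℂ := fun t => -(u t) * h t with hr
  have ure : ∀ t, (u t).re = -1 / 2 := fun t => by simp [hu]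
  have uim : ∀ t, (u t).im = t := fun t => by simp [hu]
  have fu : ∀ t, f t = 1 + u t + u t ^ 2 := fun t => by
    simp only [hf, hu]; push_cast; linear_combination (-(t : ℂ) ^ 2) * I_sq
  have hh_re : ∀ t, 0 < (h t).re := fun t => by simp only [hh, Complex.add_re, ure]; norm_num
  have hc_re : ∀ t, 0 < (c t).re := fun t => by simp only [hc, Complex.sub_re, ure]; norm_num
  have hu0 : ∀ t, u t ≠ 0 := fun t ht => by have := ure t; rw [ht] at this; norm_num at this
  have hh0 : ∀ t, h t ≠ 0 := fun t ht => by have := hh_re t; simp [ht] at this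
  have hc0 : ∀ t, c t ≠ 0 := fun t ht => by have := hc_re t; simp [ht] at this
  have hfp : ∀ t ∈ Set.Ioo (1 / 2) β, 0 < 3 / 4 - t ^ 2 := fun t ht => by nlinarith [ht.1, ht.2]
  have hf0 : ∀ t ∈ Set.Ioo (1 / 2) β, f t ≠ 0 := fun t ht =>
    Complex.ofReal_ne_zero.2 (hfp t ht).ne'
  have cu : Continuous u := by fun_prop
  have ch : Continuous h := by fun_prop
  have cu2 : Continuous fun t => u t ^ 2 := cu.pow 2
  have cu3 : Continuous fun t => u t ^ 3 := cu.pow 3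
  have cv : Continuous v := (cu.pow 2).neg.div ch hh0
  have cr : Continuous r := cu.neg.mul ch
  have hnorm : ∀ t, ‖h t‖ = ‖u t‖ := fun t => by
    rw [← sq_eq_sq₀ (norm_nonneg _) (norm_nonneg _), Complex.sq_norm, Complex.sq_norm,
      Complex.normSq_apply, Complex.normSq_apply]
    simp only [hh, Complex.add_re, Complex.add_im, ure, uim, Complex.one_re, Complex.one_im]; ring
  have hun : ∀ t ∈ Set.Ioo (1 / 2) β, ‖u t‖ < 1 := fun t ht => by
    rw [← norm_one (α := ℂ), norm_lt_iff_sq, ure, uim]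
    simp; nlinarith [ht.1, ht.2]
  have hn : ∀ t ∈ Set.Ioo (1 / 2) β, ‖u t‖ < 1 ∧ ‖u t ^ 2‖ < 1 ∧ ‖u t ^ 3‖ < 1 ∧ ‖v t‖ < 1 ∧
      ‖r t‖ < 1 := fun t ht => by
    have n1 := hun t ht
    have n2 : ‖u t‖ ^ 2 < 1 := pow_lt_one₀ (norm_nonneg _) n1 two_ne_zero
    have n0 : 0 < ‖u t‖ := norm_pos_iff.2 (hu0 t)
    refine ⟨n1, by rwa [norm_pow], by rw [norm_pow]; exact pow_lt_one₀ n0.le n1 three_ne_zero,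
      ?_, ?_⟩
    · simp only [hv]
      rw [norm_div, norm_neg, norm_pow, hnorm, sq, mul_div_cancel_left₀ _ n0.ne']
      exact n1
    · simp only [hr]
      rwa [norm_mul, norm_neg, hnorm, ← sq]
  have nu := norm_le_one_of_Ioo hαβ cu.continuousOn fun s hs => (hn s hs).1
  have nu2 := norm_le_one_of_Ioo hαβ cu2.continuousOn fun s hs => (hn s hs).2.1
  have nu3 := norm_le_one_of_Ioo hαβ cu3.continuousOn fun s hs => (hn s hs).2.2.1
  have nv := norm_le_one_of_Ioo hαβ cv.continuousOn fun s hs => (hn s hs).2.2.2.1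
  have nr := norm_le_one_of_Ioo hαβ cr.continuousOn fun s hs => (hn s hs).2.2.2.2
  have f1u2 : ∀ t, 1 - u t ^ 2 = c t * h t := fun t => by simp only [hc, hh]; ring
  have f1u3 : ∀ t, 1 - u t ^ 3 = c t * f t := fun t => by simp only [hc, fu]; ring
  have f1v : ∀ t, 1 - v t = f t / h t := fun t => by
    rw [fu, eq_div_iff (hh0 t), hv]; dsimp only
    rw [sub_mul, div_mul_cancel₀ _ (hh0 t)]; simp only [hh]; ring
  have f1r : ∀ t, 1 - r t = f t := fun t => by simp only [fu, hr, hh]; ring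
  have hld : ∀ t ∈ Set.Ioo (1 / 2) β, ∃ (φ : ℝ) (μ κ : ℂ),
      HasLogDeriv u μ t ∧ HasLogDeriv (fun s => 1 - u s) κ t ∧
      HasLogDeriv (fun s => u s ^ 2) (2 * μ) t ∧
      HasLogDeriv (fun s => 1 - u s ^ 2) (κ + (starRingEnd ℂ) μ) t ∧
      HasLogDeriv (fun s => u s ^ 3) (3 * μ) t ∧
      HasLogDeriv (fun s => 1 - u s ^ 3) (κ + φ) t ∧
      HasLogDeriv v (2 * μ - (starRingEnd ℂ) μ) t ∧
      HasLogDeriv (fun s => 1 - v s) (φ - (starRingEnd ℂ) μ) t ∧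
      HasLogDeriv r (μ + (starRingEnd ℂ) μ) t ∧
      HasLogDeriv (fun s => 1 - r s) φ t := fun t ht => by
    have du : HasDerivAt u I t := by
      refine (((Complex.ofRealCLM.hasDerivAt (x := t)).mul_const I).const_add
        ((-1 / 2 : ℝ) : ℂ)).congr_deriv ?_
      simp
    have h1 := HasLogDeriv.of_hasDerivAt du (hu0 t)
    have h2 : HasLogDeriv h ((starRingEnd ℂ) (I / u t)) t := by
      have := HasLogDeriv.of_hasDerivAt (f := h) (du.const_add 1) (hh0 t)
      -- the logarithmic derivatives `I / u` and `I / (1 + u)` are conjugate on this line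
      have e : (starRingEnd ℂ) (u t) = -h t := by
        apply Complex.ext <;> simp only [hh, Complex.conj_re, Complex.conj_im, Complex.neg_re,
          Complex.neg_im, Complex.add_re, Complex.add_im, ure, uim, Complex.one_re,
          Complex.one_im] <;> ring
      rwa [map_div₀, Complex.conj_I, e, neg_div_neg_eq]
    obtain ⟨κ, h3⟩ := exists_hasLogDeriv (f := c) (s := t)
      ((du.differentiableAt).const_sub 1) (hc0 t)
    have h4 : HasLogDeriv f (((-2 * t / (3 / 4 - t ^ 2) : ℝ)) : ℂ) t := by
      have d : HasDerivAt (fun t : ℝ => 3 / 4 - t ^ 2) (-2 * t) t := by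
        refine ((hasDerivAt_pow 2 t).const_sub (3 / 4)).congr_deriv ?_
        norm_num
      rw [Complex.ofReal_div]
      exact HasLogDeriv.of_hasDerivAt d.ofReal_comp (hf0 t ht)
    have h5 : HasLogDeriv (fun s => u s ^ 2) (2 * (I / u t)) t := by simpa using h1.pow 2
    have h6 : HasLogDeriv (fun s => u s ^ 3) (3 * (I / u t)) t := by simpa using h1.pow 3
    exact ⟨_, _, κ, h1, h3, h5, (h3.mul h2).congr (.of_forall f1u2), h6,
      (h3.mul h4).congr (.of_forall f1u3), h5.neg.div h2, (h4.div h2).congr (.of_forall f1v),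
      h1.neg.mul h2, h4.congr (.of_forall f1r)⟩
  have hlog : ∀ t ∈ Set.Ioo (1 / 2) β, ∃ L C P : ℝ,
      Real.log ‖u t‖ = L ∧ Real.log ‖1 - u t‖ = C ∧
      Real.log ‖u t ^ 2‖ = 2 * L ∧ Real.log ‖1 - u t ^ 2‖ = C + L ∧
      Real.log ‖u t ^ 3‖ = 3 * L ∧ Real.log ‖1 - u t ^ 3‖ = C + P ∧
      Real.log ‖v t‖ = L ∧ Real.log ‖1 - v t‖ = P - L ∧
      Real.log ‖r t‖ = 2 * L ∧ Real.log ‖1 - r t‖ = P := fun t ht => by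
    have e2 : Real.log ‖u t ^ 2‖ = 2 * Real.log ‖u t‖ := by rw [log_norm_pow]; norm_num
    refine ⟨_, _, Real.log ‖f t‖, rfl, rfl, e2, ?_, by rw [log_norm_pow]; norm_num, ?_, ?_, ?_,
      ?_, by rw [f1r]⟩
    · rw [f1u2, log_norm_mul (hc0 t) (hh0 t), hnorm]
    · rw [f1u3, log_norm_mul (hc0 t) (hf0 t ht)]
    · simp only [hv]
      rw [log_norm_div (neg_ne_zero.2 (pow_ne_zero 2 (hu0 t))) (hh0 t), norm_neg, e2, hnorm]; ring
    · rw [f1v, log_norm_div (hf0 t ht) (hh0 t), hnorm]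
    · simp only [hr]
      rw [log_norm_mul (neg_ne_zero.2 (hu0 t)) (hh0 t), norm_neg, hnorm]; ring
  have uβ : u β = w := by rw [hw]
  have fβ : f β = 0 := by simp only [hf, hβ2]; norm_num
  obtain ⟨w0, wc, w3, hwn⟩ := cube_root_facts hw
  have vβ : v β = 1 := by
    have := f1v β
    rw [fβ, zero_div] at this
    exact (sub_eq_zero.1 this).symm
  have rβ : r β = 1 := by
    have := f1r β
    rw [fβ] at this
    exact (sub_eq_zero.1 this).symm
  have uα : u (1 / 2) = (-1 + I) / 2 := by simp only [hu]; push_cast; ring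
  have uα2 : u (1 / 2) ^ 2 = -I / 2 := by rw [uα]; linear_combination (1 / 4 : ℂ) * I_sq
  have uα3 : u (1 / 2) ^ 3 = (1 + I) / 4 := by
    rw [uα]; linear_combination (I - 3 : ℂ) / 8 * I_sq
  have hα : h (1 / 2) = (1 + I) / 2 := by simp only [hh, uα]; ring
  have hI : (1 + I : ℂ) ≠ 0 := fun h => by simpa using congrArg Complex.re h
  have vα : v (1 / 2) = (1 + I) / 2 := by
    simp only [hv, uα2, hα]; field_simp; linear_combination (-1 : ℂ) * I_sq
  have rα : r (1 / 2) = 1 / 2 := by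
    simp only [hr, uα, hα]; linear_combination (-1 / 4 : ℂ) * I_sq
  have hD : ∀ t ∈ Set.Ioo (1 / 2) β, D (u t ^ 3) = D (u t) + D (u t ^ 2) + D (v t) :=
    fun t ht => by
    have h := eq_of_deriv_zero (F := fun t => D (u t ^ 3) - D (u t) - D (u t ^ 2) - D (v t)) ht.2
      ((((continuousOn_comp_disc continuousOn_D cu3.continuousOn nu3).sub
        (continuousOn_comp_disc continuousOn_D cu.continuousOn nu)).sub
        (continuousOn_comp_disc continuousOn_D cu2.continuousOn nu2)).sub
        (continuousOn_comp_disc continuousOn_D cv.continuousOn nv) |>.mono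
          (Set.Icc_subset_Icc_left ht.1.le))
      fun s hs => by
        have hs' : s ∈ Set.Ioo (1 / 2) β := ⟨ht.1.trans hs.1, hs.2⟩
        obtain ⟨φ, μ, κ, d1, d2, d3, d4, d5, d6, d7, d8, d9, d10⟩ := hld s hs'
        obtain ⟨L, C, P, l1, l2, l3, l4, l5, l6, l7, l8, l9, l10⟩ := hlog s hs'
        obtain ⟨n1, n2, n3, n4, n5⟩ := hn s hs'
        refine ((((d5.comp_D d6 n3).sub (d1.comp_D d2 n1)).sub
          (d3.comp_D d4 n2)).sub (d7.comp_D d8 n4)).congr_deriv ?_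
        rw [l1, l2, l3, l4, l5, l6, l7, l8]
        simp
        ring
    simp only [uβ, vβ, w3, wc, D_conj hwn, D_one] at h
    linarith
  constructor
  · have h := eq_of_deriv_zero
      (F := fun t => M (u t ^ 3) - 3 * M (u t) - 3 / 2 * M (u t ^ 2) - M (v t) - 2 * M (r t)) hαβ
      (((((continuousOn_comp_disc continuousOn_M cu3.continuousOn nu3).sub
        ((continuousOn_comp_disc continuousOn_M cu.continuousOn nu).const_mul 3)).sub
        ((continuousOn_comp_disc continuousOn_M cu2.continuousOn nu2).const_mul (3 / 2))).sub
        (continuousOn_comp_disc continuousOn_M cv.continuousOn nv)).sub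
        ((continuousOn_comp_disc continuousOn_M cr.continuousOn nr).const_mul 2))
      fun t ht => by
        obtain ⟨φ, μ, κ, d1, d2, d3, d4, d5, d6, d7, d8, d9, d10⟩ := hld t ht
        obtain ⟨L, C, P, l1, l2, l3, l4, l5, l6, l7, l8, l9, l10⟩ := hlog t ht
        obtain ⟨n1, n2, n3, n4, n5⟩ := hn t ht
        refine (((((d5.comp_M d6 n3).sub ((d1.comp_M d2 n1).const_mul 3)).sub
          ((d3.comp_M d4 n2).const_mul (3 / 2))).sub (d7.comp_M d8 n4)).sub
          ((d9.comp_M d10 n5).const_mul 2)).congr_deriv ?_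
        rw [l1, l2, l3, l4, l5, l6, l7, l8, l9, l10, hD t ht]
        simp
        ring
    simp only [uβ, vβ, rβ, w3, uα2, uα3, vα, rα] at h
    rw [uα] at h
    exact h.symm
  · have h := eq_of_deriv_zero
      (F := fun t => R (u t ^ 3) - 3 * R (u t) - 3 / 2 * R (r t)) hαβ
      (((continuousOn_comp_disc continuousOn_R cu3.continuousOn nu3).sub
        ((continuousOn_comp_disc continuousOn_R cu.continuousOn nu).const_mul 3)).sub
        ((continuousOn_comp_disc continuousOn_R cr.continuousOn nr).const_mul (3 / 2)))
      fun t ht => by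
        obtain ⟨φ, μ, κ, d1, d2, d3, d4, d5, d6, d7, d8, d9, d10⟩ := hld t ht
        obtain ⟨L, C, P, l1, l2, l3, l4, l5, l6, l7, l8, l9, l10⟩ := hlog t ht
        obtain ⟨n1, n2, n3, n4, n5⟩ := hn t ht
        -- `1 - u³` is a positive multiple of `1 - u`
        have q : (1 - u t ^ 3).arg = (1 - u t).arg := by
          rw [f1u3, mul_comm]
          exact Complex.arg_real_mul _ (hfp t ht)
        refine (((d5.comp_R d6 n3).sub ((d1.comp_R d2 n1).const_mul 3)).sub
          ((d9.comp_R d10 n5).const_mul (3 / 2))).congr_deriv ?_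
        rw [l1, l2, l5, l6, l9, l10, q]
        simp
        ring
    simp only [uβ, rβ, w3, uα3, rα] at h
    rw [uα] at h
    exact h.symm

/-! ### Duplication and special values -/

lemma M_conj (z : ℂ) : M ((starRingEnd ℂ) z) = M z := by
  have : ‖1 - (starRingEnd ℂ) z‖ = ‖1 - z‖ := by
    rw [← Complex.norm_conj (1 - z), map_sub, map_one]
  simp [M, Li_conj, this]

lemma R_conj (z : ℂ) : R ((starRingEnd ℂ) z) = R z := by
  have : ‖1 - (starRingEnd ℂ) z‖ = ‖1 - z‖ := by
    rw [← Complex.norm_conj (1 - z), map_sub, map_one]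
  simp [R, Li_conj, this]

lemma M_eq_of_norm {z : ℂ} (h : ‖z‖ = 1) : M z = (Li 3 z).re := by simp [M, h]
lemma R_eq_of_norm {z : ℂ} (h : ‖z‖ = 1) : R z = (Li 2 z).re := by simp [R, h]

lemma M_one : M 1 = zeta3 := by
  rw [M_eq_of_norm norm_one, Li, zeta3, ← Complex.ofReal_re (∑' k : ℕ, _), Complex.ofReal_tsum]
  simp

lemma R_one : R 1 = Real.pi ^ 2 / 6 := by
  have h := (hasSum_nat_add_iff' (f := fun n : ℕ => 1 / (n : ℝ) ^ 2) 1).2 hasSum_zeta_two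
  have h2 : Li 2 1 = ((Real.pi ^ 2 / 6 : ℝ) : ℂ) := by
    have h3 := h.tsum_eq
    simp only [Finset.range_one, Finset.sum_singleton, Nat.cast_zero, ne_eq, OfNat.ofNat_ne_zero,
      not_false_eq_true, zero_pow, div_zero, sub_zero] at h3
    rw [← h3, Li, Complex.ofReal_tsum]
    simp
  rw [R_eq_of_norm norm_one, h2, Complex.ofReal_re]

lemma M_sq {z : ℂ} (hz : ‖z‖ ≤ 1) (h1 : 1 - z ≠ 0) (h2 : 1 + z ≠ 0) :
    M (z ^ 2) = 4 * (M z + M (-z)) := by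
  have e3 := congrArg Complex.re (Li_sq (n := 3) (by norm_num) hz)
  have e2 := congrArg Complex.re (Li_sq (n := 2) le_rfl hz)
  norm_num at e2 e3
  have e : Real.log ‖1 - z ^ 2‖ = Real.log ‖1 - z‖ + Real.log ‖1 + z‖ := by
    rw [← log_norm_mul h1 h2]; congr 2; ring
  simp only [M, log_norm_pow, norm_neg, sub_neg_eq_add, e]
  push_cast
  linear_combination e3 / 2 - Real.log ‖z‖ * e2

lemma R_sq {z : ℂ} (hz : ‖z‖ ≤ 1) (h1 : 1 - z ≠ 0) (h2 : 1 + z ≠ 0) :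
    R (z ^ 2) = 2 * (R z + R (-z)) := by
  have e2 := congrArg Complex.re (Li_sq (n := 2) le_rfl hz)
  norm_num at e2
  have e : Real.log ‖1 - z ^ 2‖ = Real.log ‖1 - z‖ + Real.log ‖1 + z‖ := by
    rw [← log_norm_mul h1 h2]; congr 2; ring
  simp only [R, log_norm_pow, norm_neg, sub_neg_eq_add, e]
  push_cast
  linear_combination e2 / 2

lemma M_neg_one : M (-1) = -(3 / 4) * zeta3 := by
  have e3 := congrArg Complex.re (Li_sq (n := 3) (z := 1) (by norm_num) (by simp))
  norm_num at e3
  have := M_one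
  rw [M_eq_of_norm norm_one] at this
  rw [M_eq_of_norm (by simp)]
  linarith

lemma M_neg_I : M (-I) = -(3 / 32) * zeta3 := by
  have h := M_sq (z := I) (by simp) (fun h => by simpa using congrArg Complex.re h)
    (fun h => by simpa using congrArg Complex.re h)
  have hc := M_conj I
  rw [Complex.conj_I] at hc
  rw [I_sq, M_neg_one, ← hc] at h
  linarith

/-- Triplication at `1`, where `w` and `w ^ 2` contribute equally. -/
lemma M_cube_root {w : ℂ} (hw : 1 + w + w ^ 2 = 0) (hc : w ^ 2 = (starRingEnd ℂ) w) (hn : ‖w‖ = 1) :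
    M w = -(4 / 9) * zeta3 ∧ R w = -Real.pi ^ 2 / 18 := by
  have e3 := congrArg Complex.re (Li_cube_root (n := 3) (by norm_num) hw hn.le)
  have e2 := congrArg Complex.re (Li_cube_root (n := 2) le_rfl hw hn.le)
  rw [hc, Li_conj] at e2 e3
  norm_num at e2 e3
  rw [← M_eq_of_norm norm_one, ← M_eq_of_norm hn, M_one] at e3
  rw [← R_eq_of_norm norm_one, ← R_eq_of_norm hn, R_one] at e2
  constructor <;> linarith

/-- Landen's equations at the fixed point `1 / 2` of `z ↦ 1 - z`. -/
lemma half_values : M (1 / 2) = 7 / 8 * zeta3 ∧ R (1 / 2) = Real.pi ^ 2 / 12 := by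
  obtain ⟨h1, h2⟩ := landen (z := 1 / 2) (by norm_num) (by norm_num)
  have e1 : (1 : ℂ) - 1 / 2 = 1 / 2 := by norm_num
  have e2 : -(1 / 2 : ℂ) / (1 / 2) = -1 := by norm_num
  have e3 : (1 / 2 : ℂ).arg = 0 := by
    rw [Complex.arg_eq_zero_iff]; norm_num
  rw [e1, e2, M_zero, M_one, M_neg_one] at h1
  rw [e1, e3, R_zero, R_one] at h2
  constructor <;> linarith

/-- Landen's equations at `(1 + I) / 2`, which `z ↦ 1 - z` sends to its conjugate. -/
lemma half_one_add_I_values :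
    M ((1 + I) / 2) = 35 / 64 * zeta3 ∧ R ((1 + I) / 2) = 5 * Real.pi ^ 2 / 96 := by
  obtain ⟨h1, h2⟩ := landen (z := (1 + I) / 2) (by norm_num) norm_half_one_add_I
  have e1 : 1 - (1 + I) / 2 = (starRingEnd ℂ) ((1 + I) / 2) := by
    simp only [map_div₀, map_add, map_one, Complex.conj_I, map_ofNat]; ring
  have e2 : -((1 + I) / 2) / (1 - (1 + I) / 2) = -I := by
    have : (1 - (1 + I) / 2 : ℂ) ≠ 0 := fun h => by
      have := congrArg Complex.re h; norm_num at this
    rw [div_eq_iff this]; linear_combination (-1 / 2 : ℂ) * I_sq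
  have e3 : ((starRingEnd ℂ) ((1 + I) / 2)).arg = -(Real.pi / 4) := by
    rw [Complex.arg_conj, arg_half_one_add_I, if_neg (by have := Real.pi_pos; linarith)]
  rw [e2, e1, M_conj, M_zero, M_one, M_neg_I] at h1
  rw [e1, R_conj, e3, arg_half_one_add_I, R_zero, R_one] at h2
  constructor <;> linarith

/-! ### The ladder -/

/-- The ladder in terms of `M` and `R`: `kummer_ray`, `kummer_line` and duplication at
`(-1 + I) / 2` are three linear relations, from which the values at `(1 + I) / 4` and
`(-1 + I) / 2` are eliminated. -/
lemma ladder_MR : M ((1 + I) / 8) - 25 / 2 * M (I / 2) = 21 / 16 * zeta3 ∧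
    R ((1 + I) / 8) - 5 * R (I / 2) = 7 * Real.pi ^ 2 / 96 := by
  set u : ℂ := (-1 + I) / 2 with hu
  obtain ⟨k1, k2⟩ := kummer_ray
  obtain ⟨w, hw⟩ : ∃ w : ℂ, w = ((-1 / 2 : ℝ) : ℂ) + ((√3 / 2 : ℝ) : ℂ) * I := ⟨_, rfl⟩
  obtain ⟨k3, k4⟩ := kummer_line hw
  obtain ⟨w0, wc, -, hwn⟩ := cube_root_facts hw
  obtain ⟨mw, rrw⟩ := M_cube_root w0 wc hwn
  obtain ⟨mh, rh⟩ := half_values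
  obtain ⟨mg, rg⟩ := half_one_add_I_values
  have cg : (1 - I) / 2 = (starRingEnd ℂ) ((1 + I) / 2) := by
    simp only [map_div₀, map_add, map_one, Complex.conj_I, map_ofNat]; ring
  have cq : (1 - I) / 4 = (starRingEnd ℂ) ((1 + I) / 4) := by
    simp only [map_div₀, map_add, map_one, Complex.conj_I, map_ofNat]; ring
  have ch : -I / 2 = (starRingEnd ℂ) (I / 2) := by
    simp only [map_div₀, Complex.conj_I, map_ofNat]
  have cu : -(1 + I) / 2 = (starRingEnd ℂ) u := by
    simp only [hu, map_div₀, map_neg, map_add, map_one, Complex.conj_I, map_ofNat]; ring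
  have nu : -u = (starRingEnd ℂ) ((1 + I) / 2) := by rw [← cg, hu]; ring
  have u2 : u ^ 2 = (starRingEnd ℂ) (I / 2) := by
    rw [← ch, hu]; linear_combination (1 / 4 : ℂ) * I_sq
  have un : ‖u‖ ≤ 1 := by
    rw [← norm_neg, nu, Complex.norm_conj]; exact norm_half_one_add_I.le
  have u1 : 1 - u ≠ 0 := fun h => by have := congrArg Complex.im h; norm_num [hu] at this
  have u1' : 1 + u ≠ 0 := fun h => by have := congrArg Complex.im h; norm_num [hu] at this
  have s1 := M_sq un u1 u1'
  have s2 := R_sq un u1 u1'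
  rw [u2, nu, M_conj, M_conj, mg] at s1
  rw [u2, nu, R_conj, R_conj, rg] at s2
  rw [cq, cu, M_conj, M_conj, mg, M_neg_one, M_one] at k1
  rw [cq, R_conj] at k2
  rw [ch, M_conj, wc, M_conj, mw, mg, mh, M_one] at k3
  rw [rh, rrw, R_one] at k4
  constructor <;> linarith

theorem trilog_ladder_E :
    (4 / 25) * (Li 3 ((1 - I) / 8)).re - 2 * (Li 3 (-I / 2)).re =
      (21 / 100) * zeta3 + Real.log 2 ^ 3 / 12 - 7 * Real.pi ^ 2 * Real.log 2 / 240 := by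
  obtain ⟨hM, hR⟩ := ladder_MR
  have ch : -I / 2 = (starRingEnd ℂ) (I / 2) := by
    simp only [map_div₀, Complex.conj_I, map_ofNat]
  have cp : (1 - I) / 8 = (starRingEnd ℂ) ((1 + I) / 8) := by
    simp only [map_div₀, map_add, map_one, Complex.conj_I, map_ofNat]; ring
  rw [ch, cp, Li_conj, Li_conj, Complex.conj_re, Complex.conj_re]
  have key : ∀ z : ℂ, Real.log ‖z‖ = Real.log (z.re ^ 2 + z.im ^ 2) / 2 := fun z => by
    rw [sq, sq, ← Complex.normSq_apply, ← Complex.sq_norm, Real.log_pow]; push_cast; ring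
  have l1 : Real.log ‖I / 2‖ = -Real.log 2 := by
    rw [key, show (I / 2).re ^ 2 + (I / 2).im ^ 2 = ((2 : ℝ) ^ 2)⁻¹ by norm_num, Real.log_inv,
      Real.log_pow]
    push_cast; ring
  have l2 : Real.log ‖(1 + I) / 8‖ = -(5 / 2) * Real.log 2 := by
    rw [key, show ((1 + I) / 8).re ^ 2 + ((1 + I) / 8).im ^ 2 = ((2 : ℝ) ^ 5)⁻¹ by norm_num,
      Real.log_inv, Real.log_pow]
    push_cast; ring
  have l3 : Real.log ‖1 - I / 2‖ = Real.log 5 / 2 - Real.log 2 := by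
    rw [key, show (1 - I / 2).re ^ 2 + (1 - I / 2).im ^ 2 = (5 : ℝ) / 2 ^ 2 by norm_num,
      Real.log_div (by norm_num) (by norm_num), Real.log_pow]
    push_cast; ring
  have l4 : Real.log ‖1 - (1 + I) / 8‖ = Real.log 5 - 5 / 2 * Real.log 2 := by
    rw [key, show (1 - (1 + I) / 8).re ^ 2 + (1 - (1 + I) / 8).im ^ 2 = (5 : ℝ) ^ 2 / 2 ^ 5 by
      norm_num, Real.log_div (by norm_num) (by norm_num), Real.log_pow, Real.log_pow]
    push_cast; ring
  simp only [M, l1, l2, l3, l4] at hM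
  simp only [R, l1, l2, l3, l4] at hR
  -- this multiple of `hR` cancels the terms in `Li 2`
  linear_combination 4 / 25 * hM - 2 / 5 * Real.log 2 * hR
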